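/- If each A_k is nonzero and the cyclic BCPG stepsize parameters are chosen as P_k = L_k = λ_max(A_k^T A_k) for every k, then for all r ≥ 0 the iterates satisfy Δ^{(r+1)} := f(x^{(r+1)}) − f* ≤ 3 · max{ Δ^{(0)}, 2 log²(2NK) · (L_max + L²/L_min) · R_0² } / (r+1). -/

import Mathlib

open Finset

/-- Squared Euclidean norm of a vector in `ℝ^n`. -/
noncomputable def sqnorm {n : ℕ} (v : Fin n → ℝ) : ℝ := ∑ i, v i ^ 2

/-- Euclidean inner product on `ℝ^n`. -/
noncomputable def dotp {n : ℕ} (u v : Fin n → ℝ) : ℝ := ∑ i, u i * v i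

/-- `λ_max(AᵀA)` for a real matrix `A`, characterized as the maximum of `‖Av‖²`
over unit vectors `v`. -/
noncomputable def lamMaxQ {M N : ℕ} (A : Matrix (Fin M) (Fin N) ℝ) : ℝ :=
  sSup {r : ℝ | ∃ v : Fin N → ℝ, sqnorm v = 1 ∧ r = sqnorm (A.mulVec v)}

/-- `λ_min(AᵀA)` for a real matrix `A`, characterized as the minimum of `‖Av‖²`
over unit vectors `v`. -/
noncomputable def lamMinQ {M N : ℕ} (A : Matrix (Fin M) (Fin N) ℝ) : ℝ :=
  sInf {r : ℝ | ∃ v : Fin N → ℝ, sqnorm v = 1 ∧ r = sqnorm (A.mulVec v)}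

/-- `λ_max(AᵀA)` for the concatenated matrix `A = [A_1 ⋯ A_K]`, acting on block
vectors. -/
noncomputable def lamMaxBlock {K M N : ℕ} (A : Fin K → Matrix (Fin M) (Fin N) ℝ) : ℝ :=
  sSup {r : ℝ | ∃ v : Fin K → Fin N → ℝ, (∑ k, sqnorm (v k)) = 1 ∧
    r = sqnorm (∑ k, (A k).mulVec (v k))}

/-- Maximum of a finite family of reals indexed by `Fin K`, `K ≥ 1`. -/
noncomputable def maxOf {K : ℕ} (hK : 1 ≤ K) (P : Fin K → ℝ) : ℝ :=
  Finset.univ.sup' (Finset.univ_nonempty_iff.mpr ⟨⟨0, hK⟩⟩) P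

/-- Minimum of a finite family of reals indexed by `Fin K`, `K ≥ 1`. -/
noncomputable def minOf {K : ℕ} (hK : 1 ≤ K) (P : Fin K → ℝ) : ℝ :=
  Finset.univ.inf' (Finset.univ_nonempty_iff.mpr ⟨⟨0, hK⟩⟩) P

/-- The residual `Σ_k A_k x_k − b`. -/
noncomputable def resid {K M N : ℕ} (A : Fin K → Matrix (Fin M) (Fin N) ℝ)
    (b : Fin M → ℝ) (x : Fin K → Fin N → ℝ) : Fin M → ℝ :=
  (∑ k, (A k).mulVec (x k)) - b

/-- The smooth part `g(x) = (1/2)‖Σ_k A_k x_k − b‖²`. -/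
noncomputable def gq {K M N : ℕ} (A : Fin K → Matrix (Fin M) (Fin N) ℝ)
    (b : Fin M → ℝ) (x : Fin K → Fin N → ℝ) : ℝ :=
  (1 / 2) * sqnorm (resid A b x)

/-- The objective `f(x) = g(x) + Σ_k h_k(x_k)`. -/
noncomputable def fq {K M N : ℕ} (A : Fin K → Matrix (Fin M) (Fin N) ℝ)
    (b : Fin M → ℝ) (h : Fin K → (Fin N → ℝ) → ℝ) (x : Fin K → Fin N → ℝ) : ℝ :=
  gq A b x + ∑ k, h k (x k)

/-- The partial gradient `∇_k g(x) = A_kᵀ (Σ_j A_j x_j − b)`. -/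
noncomputable def gradk {K M N : ℕ} (A : Fin K → Matrix (Fin M) (Fin N) ℝ)
    (b : Fin M → ℝ) (x : Fin K → Fin N → ℝ) (k : Fin K) : Fin N → ℝ :=
  ((A k).transpose).mulVec (resid A b x)

/-- The intermediate point `w_k^{(r+1)}` of the cycle: blocks `j < k` come from
`x^{(r+1)} = xp`, the remaining blocks from `x^{(r)} = x`. -/
def wpt {K N : ℕ} (x xp : Fin K → Fin N → ℝ) (k : Fin K) : Fin K → Fin N → ℝ :=
  fun j => if j < k then xp j else x j

/-- The objective of the `k`-th BCPG prox subproblem at the point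
`w_k^{(r+1)} = wpt x xp k`, evaluated at candidate block `y`. -/
noncomputable def bcpgObj {K M N : ℕ} (A : Fin K → Matrix (Fin M) (Fin N) ℝ)
    (b : Fin M → ℝ) (h : Fin K → (Fin N → ℝ) → ℝ) (P : Fin K → ℝ)
    (x xp : Fin K → Fin N → ℝ) (k : Fin K) (y : Fin N → ℝ) : ℝ :=
  dotp (gradk A b (wpt x xp k) k) (y - x k) + (P k / 2) * sqnorm (y - x k) + h k y

/-- One cycle of cyclic BCPG: `xp = x^{(r+1)}` is obtained from `x = x^{(r)}`
by letting, for `k = 1,…,K`, the `k`-th block minimize the prox subproblem at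
`w_k^{(r+1)}` over `X_k`. -/
def BCPGStep {K M N : ℕ} (A : Fin K → Matrix (Fin M) (Fin N) ℝ)
    (b : Fin M → ℝ) (h : Fin K → (Fin N → ℝ) → ℝ)
    (X : Fin K → Set (Fin N → ℝ)) (P : Fin K → ℝ)
    (x xp : Fin K → Fin N → ℝ) : Prop :=
  ∀ k : Fin K, xp k ∈ X k ∧ ∀ y ∈ X k,
    bcpgObj A b h P x xp k (xp k) ≤ bcpgObj A b h P x xp k y

/-- One cycle of cyclic exact BCD: `xp = x^{(r+1)}` is obtained from
`x = x^{(r)}` by letting, for `k = 1,…,K`, the `k`-th block minimize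
`f(x_1^{(r+1)},…,x_{k−1}^{(r+1)}, ·, x_{k+1}^{(r)},…,x_K^{(r)})` over `X_k`. -/
def BCDStep {K M N : ℕ} (A : Fin K → Matrix (Fin M) (Fin N) ℝ)
    (b : Fin M → ℝ) (h : Fin K → (Fin N → ℝ) → ℝ)
    (X : Fin K → Set (Fin N → ℝ))
    (x xp : Fin K → Fin N → ℝ) : Prop :=
  ∀ k : Fin K, xp k ∈ X k ∧ ∀ y ∈ X k,
    fq A b h (Function.update (wpt x xp k) k (xp k)) ≤
      fq A b h (Function.update (wpt x xp k) k y)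

/-!
The first-order condition of the prox step for block `k`, tested at the previous iterate, gives
sufficient decrease: `∑ₖ Pₖ‖yₖ - xₖ‖² ≤ 2 (f(x) - f(y))` for a cycle from `x` to `y`. Tested at a
comparison point `z`, it bounds `f(y) - f(z)` by bilinear forms in `y - z` and `y - x`, because the
residual used in step `k` differs from the one at `y` by the moves of the blocks `j ≥ k`. Blocks
`j > k` contribute the strictly block upper triangular part of `AᵀA`; recursive halving of the index
set shows that cutting it out of `AᵀA` costs only a factor logarithmic in the number of blocks.
Block `j = k` contributes `AₖᵀAₖ - Pₖ I`, which is handled by Cauchy–Schwarz for the positive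
semidefinite matrix `Pₖ I - AₖᵀAₖ`. With `D = f - f(z)` the two estimates combine to
`D(y)² ≤ 2 C (D(x) - D(y))`, and this recursion forces `D = O(C / r)`.
-/

section RealEstimates

theorem le_three_mul_div_of_sq_le {D : ℕ → ℝ} {C : ℝ} (hC : 0 ≤ C) (h0 : D 0 ≤ C)
    (hD : ∀ r, 0 ≤ D (r + 1) → D (r + 1) ^ 2 ≤ 2 * C * (D r - D (r + 1))) (r : ℕ) :
    D r ≤ 3 * C / (r + 2) := by
  induction r with
  | zero => norm_num; linarith
  | succ r ih =>
    by_contra! hlt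
    push_cast at hlt
    set q := 3 * C / ((r : ℝ) + 1 + 2) with hq
    have hq0 : 0 ≤ q := by positivity
    have hsq : q ^ 2 < D (r + 1) ^ 2 := by gcongr
    have hih : 2 * C * D r ≤ 2 * C * (3 * C / (r + 2)) := by gcongr
    have hqD : 2 * C * q ≤ 2 * C * D (r + 1) := by gcongr
    have hgap : q ^ 2 + 2 * C * q - 2 * C * (3 * C / (r + 2)) =
        3 * C ^ 2 * r / ((r + 2) * (r + 1 + 2) ^ 2) := by
      rw [hq]; field_simp; ring
    have hgap0 : 0 ≤ 3 * C ^ 2 * r / ((r + 2) * ((r : ℝ) + 1 + 2) ^ 2) := by positivity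
    linarith [hD r (hq0.trans hlt.le)]

theorem sq_le_of_le_mul_sqrt_add_sqrt {δ t α β : ℝ} (hδ : 0 ≤ δ) (hα : 0 ≤ α) (hβ : 0 ≤ β)
    (h : δ ≤ t * √α + √β) : δ ^ 2 ≤ (t ^ 2 + 1) * (α + β) :=
  calc δ ^ 2 ≤ (t * √α + √β) ^ 2 := by gcongr
    _ ≤ (t ^ 2 + 1) * (√α ^ 2 + √β ^ 2) := by nlinarith [sq_nonneg (t * √β - √α)]
    _ = (t ^ 2 + 1) * (α + β) := by rw [Real.sq_sqrt hα, Real.sq_sqrt hβ]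

theorem clog_two_mul_log_two_le {n : ℕ} (hn : n ≠ 0) :
    Nat.clog 2 n * Real.log 2 ≤ Real.log (2 * n) := by
  have hn' : (1 : ℝ) ≤ n := mod_cast Nat.one_le_iff_ne_zero.mpr hn
  have hlogb : Real.logb 2 n + 1 = Real.log (2 * n) / Real.log 2 := by
    rw [Real.log_mul two_ne_zero (by positivity), add_div, div_self (by positivity), add_comm]
    rfl
  rw [← le_div_iff₀ (by positivity), ← hlogb, ← Real.natCeil_logb_natCast]
  exact (Nat.ceil_lt_add_one (Real.logb_nonneg one_lt_two hn')).le

theorem clog_two_sq_add_one_le {n : ℕ} (hn : 3 ≤ n) :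
    (3 / 8 + 3 / 4 * (Nat.clog 2 n : ℝ)) ^ 2 + 1 ≤ 2 * Real.log (2 * n) ^ 2 := by
  have hlog6 : Real.log 2 + Real.log 3 ≤ Real.log (2 * n) := by
    rw [← Real.log_mul two_ne_zero three_ne_zero]
    gcongr
    exact_mod_cast hn
  have hlog : 1.79 ≤ Real.log (2 * n) := by
    linarith [Real.log_two_gt_d9, Real.log_three_gt_d9]
  have hclog : (Nat.clog 2 n : ℝ) ≤ 1.4428 * Real.log (2 * n) := by
    nlinarith [clog_two_mul_log_two_le (n := n) (by lia), Real.log_two_gt_d9]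
  calc (3 / 8 + 3 / 4 * (Nat.clog 2 n : ℝ)) ^ 2 + 1
      ≤ (3 / 8 + 3 / 4 * (1.4428 * Real.log (2 * n))) ^ 2 + 1 := by gcongr
    _ ≤ 2 * Real.log (2 * n) ^ 2 := by nlinarith

end RealEstimates

section TriangularTruncation

-- `[[t, 1], [0, t]]` has singular values `σ ≥ τ` with `σ τ = t²` and `σ - τ = 1`, so its norm `σ`
-- is the positive root of `σ² - σ = t²`.
theorem mul_add_mul_add_le_mul_sqrt_mul_sqrt {t t' u₁ u₂ v₁ v₂ : ℝ} (ht' : 1 ≤ t')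
    (ht : t ^ 2 ≤ t' ^ 2 - t') :
    t * (u₁ * v₁) + t * (u₂ * v₂) + u₁ * v₂ ≤ t' * (√(u₁ ^ 2 + u₂ ^ 2) * √(v₁ ^ 2 + v₂ ^ 2)) := by
  have hv₂ : t ^ 2 * v₂ ^ 2 ≤ (t' ^ 2 - t') * v₂ ^ 2 := by gcongr
  have hv₁ : t ^ 2 * v₁ ^ 2 ≤ (t' ^ 2 - t') * v₁ ^ 2 := by gcongr
  have hdiscr : 0 ≤ t' * v₁ ^ 2 - 2 * t * v₁ * v₂ + (t' - 1) * v₂ ^ 2 := by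
    refine nonneg_of_mul_nonneg_right (a := t') ?_ (by linarith)
    nlinarith [sq_nonneg (t' * v₁ - t * v₂)]
  have himage : (t * v₁ + v₂) ^ 2 + (t * v₂) ^ 2 ≤ t' ^ 2 * (v₁ ^ 2 + v₂ ^ 2) := by nlinarith
  calc t * (u₁ * v₁) + t * (u₂ * v₂) + u₁ * v₂ = u₁ * (t * v₁ + v₂) + u₂ * (t * v₂) := by ring
    _ ≤ √(u₁ ^ 2 + u₂ ^ 2) * √((t * v₁ + v₂) ^ 2 + (t * v₂) ^ 2) := by
      rw [← Real.sqrt_mul (by positivity)]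
      apply Real.le_sqrt_of_sq_le
      nlinarith [sq_nonneg (u₁ * (t * v₂) - u₂ * (t * v₁ + v₂))]
    _ ≤ √(u₁ ^ 2 + u₂ ^ 2) * √(t' ^ 2 * (v₁ ^ 2 + v₂ ^ 2)) := by gcongr
    _ = t' * (√(u₁ ^ 2 + u₂ ^ 2) * √(v₁ ^ 2 + v₂ ^ 2)) := by
      rw [Real.sqrt_mul (sq_nonneg t'), Real.sqrt_sq (by linarith)]
      ring

variable {ι : Type*} [LinearOrder ι]

theorem exists_union_eq_of_card_le_add (s : Finset ι) {m n : ℕ} (hs : #s ≤ m + n) :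
    ∃ S T : Finset ι, S ∪ T = s ∧ #S ≤ m ∧ #T ≤ n ∧ ∀ i ∈ S, ∀ j ∈ T, i < j := by
  induction s using Finset.induction_on_max generalizing n with
  | empty => exact ⟨∅, ∅, by simp⟩
  | insert a s ha ih =>
    rcases n with _ | n
    · exact ⟨insert a s, ∅, by simpa using hs⟩
    · have has : a ∉ s := fun h => (ha a h).false
      rw [card_insert_of_notMem has, ← add_assoc, add_le_add_iff_right] at hs
      obtain ⟨S, T, rfl, hS, hT, hlt⟩ := ih hs
      refine ⟨S, insert a T, union_insert a S T, hS,
        (card_insert_le a T).trans (by lia), fun i hi j hj => ?_⟩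
      rcases mem_insert.mp hj with rfl | hj
      · exact ha i (mem_union_left T hi)
      · exact hlt i hi j hj

theorem sum_sum_filter_lt_union {M : Type*} [AddCommMonoid M] {S T : Finset ι}
    (hlt : ∀ i ∈ S, ∀ j ∈ T, i < j) (F : ι → ι → M) :
    ∑ i ∈ S ∪ T, ∑ j ∈ S ∪ T with i < j, F i j =
      ∑ i ∈ S, ∑ j ∈ S with i < j, F i j + ∑ i ∈ T, ∑ j ∈ T with i < j, F i j +
        ∑ i ∈ S, ∑ j ∈ T, F i j := by
  have hdisj : Disjoint S T := disjoint_left.mpr fun i hS hT => (hlt i hS i hT).false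
  have hS : ∀ i ∈ S, ∑ j ∈ S ∪ T with i < j, F i j =
      ∑ j ∈ S with i < j, F i j + ∑ j ∈ T, F i j := fun i hi => by
    rw [filter_union, sum_union (disjoint_filter_filter hdisj), filter_true_of_mem (hlt i hi)]
  have hT : ∀ i ∈ T, ∑ j ∈ S ∪ T with i < j, F i j = ∑ j ∈ T with i < j, F i j := fun i hi => by
    rw [filter_union, filter_false_of_mem fun j hj => (hlt j hj i hi).not_gt, empty_union]
  rw [sum_union hdisj, sum_congr rfl hS, sum_congr rfl hT, sum_add_distrib, add_right_comm]

-- Halving `s` leaves the triangles of the two halves and one full rectangle between them. The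
-- constants must satisfy `t (p + 1) ^ 2 - t (p + 1) ≥ t p ^ 2`, and from `3 / 8` on increments of
-- `3 / 4` are large enough.
theorem sum_sum_filter_lt_le {F : ι → ι → ℝ} {U V : ι → ℝ} (hU : 0 ≤ U) (hV : 0 ≤ V)
    (hF : ∀ S T : Finset ι, ∑ i ∈ S, ∑ j ∈ T, F i j ≤ √(∑ i ∈ S, U i) * √(∑ j ∈ T, V j))
    {p : ℕ} {s : Finset ι} (hs : #s ≤ 2 ^ p) :
    ∑ i ∈ s, ∑ j ∈ s with i < j, F i j ≤
      (3 / 8 + 3 / 4 * (p : ℝ)) * (√(∑ i ∈ s, U i) * √(∑ j ∈ s, V j)) := by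
  induction p generalizing s with
  | zero =>
    have hempty : ∀ i ∈ s, ∑ j ∈ s with i < j, F i j = 0 := fun i hi => by
      rw [filter_false_of_mem fun j hj => (card_le_one.mp hs i hi j hj).not_lt, sum_empty]
    rw [sum_eq_zero hempty]
    positivity
  | succ p ih =>
    obtain ⟨S, T, rfl, hS, hT, hlt⟩ :=
      exists_union_eq_of_card_le_add s (hs.trans_eq (by rw [pow_succ, mul_two]))
    have hdisj : Disjoint S T := disjoint_left.mpr fun i hS hT => (hlt i hS i hT).false
    have hUV := mul_add_mul_add_le_mul_sqrt_mul_sqrt (t := 3 / 8 + 3 / 4 * (p : ℝ))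
      (t' := 3 / 8 + 3 / 4 * ((p + 1 : ℕ) : ℝ))
      (u₁ := √(∑ i ∈ S, U i)) (u₂ := √(∑ i ∈ T, U i))
      (v₁ := √(∑ j ∈ S, V j)) (v₂ := √(∑ j ∈ T, V j))
      (by push_cast; linarith [p.cast_nonneg (α := ℝ)])
      (by push_cast; nlinarith [p.cast_nonneg (α := ℝ)])
    simp only [Real.sq_sqrt (sum_nonneg fun i _ => hU i),
      Real.sq_sqrt (sum_nonneg fun i _ => hV i), ← sum_union hdisj] at hUV
    rw [sum_sum_filter_lt_union hlt]
    linarith [ih hS, ih hT, hF S T]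

end TriangularTruncation

section ProximalPoint

open scoped InnerProductSpace

variable {E F : Type*} [NormedAddCommGroup E] [InnerProductSpace ℝ E]
  [NormedAddCommGroup F] [InnerProductSpace ℝ F]

theorem sub_le_of_isMinOn_prox {ℓ : E →ₗ[ℝ] ℝ} {τ : ℝ} {φ : E → ℝ} {s : Set E} {x p y : E}
    (hφ : ConvexOn ℝ s φ) (hp : p ∈ s) (hy : y ∈ s)
    (hmin : IsMinOn (fun z => ℓ (z - x) + τ / 2 * ‖z - x‖ ^ 2 + φ z) s p) :
    φ p - φ y ≤ ℓ (y - p) + τ * ⟪p - x, y - p⟫_ℝ := by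
  have hsegment : ∀ θ ∈ Set.Ioc (0 : ℝ) 1,
      φ p - φ y ≤ ℓ (y - p) + τ * ⟪p - x, y - p⟫_ℝ + θ * (τ / 2 * ‖y - p‖ ^ 2) := by
    rintro θ ⟨hθ0, hθ1⟩
    have hle := isMinOn_iff.mp hmin _
      (hφ.1 hp hy (sub_nonneg.mpr hθ1) hθ0.le (sub_add_cancel 1 θ))
    have hconv := hφ.2 hp hy (sub_nonneg.mpr hθ1) hθ0.le (sub_add_cancel 1 θ)
    have hsub : (1 - θ) • p + θ • y - x = (p - x) + θ • (y - p) := by module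
    simp only [hsub, map_add, map_smul, norm_add_sq_real, real_inner_smul_right, norm_smul,
      mul_pow, Real.norm_eq_abs, sq_abs, smul_eq_mul] at hle hconv
    refine le_of_mul_le_mul_left ?_ hθ0
    linarith
  have hlim : Filter.Tendsto
      (fun θ : ℝ => ℓ (y - p) + τ * ⟪p - x, y - p⟫_ℝ + θ * (τ / 2 * ‖y - p‖ ^ 2))
      (nhdsWithin 0 (Set.Ioi 0)) (nhds (ℓ (y - p) + τ * ⟪p - x, y - p⟫_ℝ)) :=
    tendsto_nhdsWithin_of_tendsto_nhds (Continuous.tendsto' (by fun_prop) _ _ (by simp))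
  exact ge_of_tendsto hlim
    (Filter.mem_of_superset (Ioc_mem_nhdsGT one_pos) hsegment)

-- Cauchy–Schwarz for the positive semidefinite form `τ⟪u, v⟫ - ⟪A u, A v⟫`.
theorem inner_map_sub_mul_inner_le {A : E →ₗ[ℝ] F} {τ : ℝ} (hτ : 0 ≤ τ)
    (hA : ∀ v, ‖A v‖ ^ 2 ≤ τ * ‖v‖ ^ 2) (u v : E) :
    ⟪A u, A v⟫_ℝ - τ * ⟪u, v⟫_ℝ ≤ τ * (‖u‖ * ‖v‖) := by
  let B : LinearMap.BilinForm ℝ E := τ • innerₗ E - (innerₗ F).compl₁₂ A A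
  have hB : ∀ u v, B u v = τ * ⟪u, v⟫_ℝ - ⟪A u, A v⟫_ℝ := fun _ _ => rfl
  have hB0 : ∀ v, 0 ≤ B v v := fun v => by
    rw [hB, real_inner_self_eq_norm_sq, real_inner_self_eq_norm_sq]
    exact sub_nonneg.mpr (hA v)
  have hBle : ∀ v, B v v ≤ τ * ‖v‖ ^ 2 := fun v => by
    rw [hB, real_inner_self_eq_norm_sq, real_inner_self_eq_norm_sq]
    exact sub_le_self _ (sq_nonneg _)
  have hBuv : B u v ^ 2 ≤ (τ * (‖u‖ * ‖v‖)) ^ 2 :=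
    calc B u v ^ 2 = B u v * B v u := by rw [hB, hB, real_inner_comm u v, real_inner_comm (A u), sq]
      _ ≤ B u u * B v v := B.apply_mul_apply_le_of_forall_zero_le hB0 u v
      _ ≤ (τ * ‖u‖ ^ 2) * (τ * ‖v‖ ^ 2) := mul_le_mul (hBle u) (hBle v) (hB0 v) (by positivity)
      _ = (τ * (‖u‖ * ‖v‖)) ^ 2 := by ring
  linarith [(abs_le_of_sq_le_sq' hBuv (by positivity)).1, hB u v]

end ProximalPoint

section BlockMaps

open scoped InnerProductSpace

variable {ι F : Type*} [NormedAddCommGroup F] [InnerProductSpace ℝ F]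

theorem norm_add_sum_sq [LinearOrder ι] (ρ : F) (c : ι → F) (s : Finset ι) :
    ‖ρ + ∑ k ∈ s, c k‖ ^ 2 =
      ‖ρ‖ ^ 2 + ∑ k ∈ s, (2 * ⟪ρ + ∑ j ∈ s with j < k, c j, c k⟫_ℝ + ‖c k‖ ^ 2) := by
  induction s using Finset.induction_on_max with
  | empty => simp
  | insert a s ha ih =>
    have has : a ∉ s := fun h => (ha a h).false
    have hlow : ∀ k ∈ s, 2 * ⟪ρ + ∑ j ∈ insert a s with j < k, c j, c k⟫_ℝ + ‖c k‖ ^ 2 =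
        2 * ⟪ρ + ∑ j ∈ s with j < k, c j, c k⟫_ℝ + ‖c k‖ ^ 2 := fun k hk => by
      rw [filter_insert, if_neg (ha k hk).not_gt]
    have htop : {j ∈ insert a s | j < a} = s := by
      rw [filter_insert, if_neg (lt_irrefl a), filter_true_of_mem ha]
    rw [sum_insert has, sum_insert has, htop, sum_congr rfl hlow,
      add_comm (c a), ← add_assoc, norm_add_sq_real, ih]
    ring

variable [Fintype ι] {E : ι → Type*}
  [∀ k, NormedAddCommGroup (E k)] [∀ k, InnerProductSpace ℝ (E k)]
  {A : ∀ k, E k →ₗ[ℝ] F} {L : ℝ}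

theorem norm_sum_map_sq_le (hL : ∀ v : (∀ k, E k), ‖∑ k, A k (v k)‖ ^ 2 ≤ L * ∑ k, ‖v k‖ ^ 2)
    (S : Finset ι) (v : ∀ k, E k) : ‖∑ k ∈ S, A k (v k)‖ ^ 2 ≤ L * ∑ k ∈ S, ‖v k‖ ^ 2 := by
  classical
  simpa [apply_ite] using hL fun k => if k ∈ S then v k else 0

theorem sum_inner_map_sub_mul_inner_le {P : ι → ℝ} {B : ℝ} (hP : 0 ≤ P) (hPB : ∀ k, P k ≤ B)
    (hA : ∀ k v, ‖A k v‖ ^ 2 ≤ P k * ‖v‖ ^ 2) (u v : ∀ k, E k) :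
    ∑ k, (⟪A k (u k), A k (v k)⟫_ℝ - P k * ⟪u k, v k⟫_ℝ) ≤
      √(B * ((∑ k, ‖u k‖ ^ 2) * ∑ k, P k * ‖v k‖ ^ 2)) := by
  have hterm : ∀ k, ⟪A k (u k), A k (v k)⟫_ℝ - P k * ⟪u k, v k⟫_ℝ ≤
      √(P k * ‖u k‖ ^ 2) * √(P k * ‖v k‖ ^ 2) := fun k => by
    refine (inner_map_sub_mul_inner_le (hP k) (hA k) (u k) (v k)).trans_eq ?_
    rw [Real.sqrt_mul (hP k), Real.sqrt_mul (hP k), Real.sqrt_sq (norm_nonneg _),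
      Real.sqrt_sq (norm_nonneg _), mul_mul_mul_comm, Real.mul_self_sqrt (hP k)]
  have hPu : ∀ k, 0 ≤ P k * ‖u k‖ ^ 2 := fun k => mul_nonneg (hP k) (sq_nonneg _)
  have hPv : ∀ k, 0 ≤ P k * ‖v k‖ ^ 2 := fun k => mul_nonneg (hP k) (sq_nonneg _)
  calc ∑ k, (⟪A k (u k), A k (v k)⟫_ℝ - P k * ⟪u k, v k⟫_ℝ)
      ≤ ∑ k, √(P k * ‖u k‖ ^ 2) * √(P k * ‖v k‖ ^ 2) := sum_le_sum fun k _ => hterm k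
    _ ≤ √(∑ k, P k * ‖u k‖ ^ 2) * √(∑ k, P k * ‖v k‖ ^ 2) :=
      Real.sum_sqrt_mul_sqrt_le _ hPu hPv
    _ ≤ √(B * ∑ k, ‖u k‖ ^ 2) * √(∑ k, P k * ‖v k‖ ^ 2) := by
      rw [mul_sum]
      gcongr with k
      exact hPB k
    _ = √(B * ((∑ k, ‖u k‖ ^ 2) * ∑ k, P k * ‖v k‖ ^ 2)) := by
      rw [← Real.sqrt_mul' _ (sum_nonneg fun k _ => hPv k), mul_assoc]

theorem sum_sum_inner_map_lt_le [LinearOrder ι] (hL0 : 0 ≤ L)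
    (hL : ∀ v : (∀ k, E k), ‖∑ k, A k (v k)‖ ^ 2 ≤ L * ∑ k, ‖v k‖ ^ 2) {p : ℕ}
    (hp : Fintype.card ι ≤ 2 ^ p) (u v : ∀ k, E k) :
    ∑ i, ∑ j with i < j, ⟪A i (u i), A j (v j)⟫_ℝ ≤
      (3 / 8 + 3 / 4 * (p : ℝ)) * (√(L * ∑ k, ‖u k‖ ^ 2) * √(L * ∑ k, ‖v k‖ ^ 2)) := by
  have hrect : ∀ S T : Finset ι, ∑ i ∈ S, ∑ j ∈ T, ⟪A i (u i), A j (v j)⟫_ℝ ≤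
      √(∑ k ∈ S, L * ‖u k‖ ^ 2) * √(∑ k ∈ T, L * ‖v k‖ ^ 2) := fun S T => by
    simp only [← inner_sum, ← sum_inner, ← mul_sum]
    exact (real_inner_le_norm _ _).trans (mul_le_mul
      (Real.le_sqrt_of_sq_le (norm_sum_map_sq_le hL S u))
      (Real.le_sqrt_of_sq_le (norm_sum_map_sq_le hL T v)) (norm_nonneg _) (Real.sqrt_nonneg _))
  have htri := sum_sum_filter_lt_le (fun k => by positivity) (fun k => by positivity) hrect
    (s := univ) (p := p) hp
  simpa only [mul_sum] using htri

end BlockMaps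

/-- The data of the block-structured composite least-squares problem
`min ½‖∑ₖ Aₖ xₖ - b‖² + ∑ₖ hₖ(xₖ)` over `xₖ ∈ Xₖ`, with blocks in arbitrary real inner product
spaces. -/
structure BlockLeastSquares {ι : Type*} (E : ι → Type*) (F : Type*)
    [∀ k, NormedAddCommGroup (E k)] [∀ k, InnerProductSpace ℝ (E k)]
    [NormedAddCommGroup F] [InnerProductSpace ℝ F] where
  A : ∀ k, E k →ₗ[ℝ] F
  b : F
  h : ∀ k, E k → ℝ
  X : ∀ k, Set (E k)

/-- The point reached just before block `k` is updated in a cycle leading from `x` to `y`; it is the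
analogue of `wpt` for blocks in possibly different spaces. -/
def cyclePoint {ι : Type*} [LT ι] [DecidableLT ι] {E : ι → Type*} (x y : ∀ k, E k) (k : ι) :
    ∀ j, E j :=
  fun j => if j < k then y j else x j

namespace BlockLeastSquares

open scoped InnerProductSpace

variable {ι F : Type*} [Fintype ι] {E : ι → Type*}
  [∀ k, NormedAddCommGroup (E k)] [∀ k, InnerProductSpace ℝ (E k)]
  [NormedAddCommGroup F] [InnerProductSpace ℝ F]

/-- The residual `∑ₖ Aₖ xₖ - b`. -/
def residual (Q : BlockLeastSquares E F) (x : ∀ k, E k) : F := ∑ k, Q.A k (x k) - Q.b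

/-- The objective `½‖∑ₖ Aₖ xₖ - b‖² + ∑ₖ hₖ(xₖ)`, regardless of feasibility. -/
noncomputable def objective (Q : BlockLeastSquares E F) (x : ∀ k, E k) : ℝ :=
  1 / 2 * ‖Q.residual x‖ ^ 2 + ∑ k, Q.h k (x k)

theorem residual_sub_residual (Q : BlockLeastSquares E F) (x y : ∀ k, E k) :
    Q.residual y - Q.residual x = ∑ k, Q.A k (y k - x k) := by
  simp only [residual, map_sub, sum_sub_distrib, sub_sub_sub_cancel_right]

theorem half_norm_residual_sq_sub_le (Q : BlockLeastSquares E F) (y z : ∀ k, E k) :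
    1 / 2 * ‖Q.residual y‖ ^ 2 - 1 / 2 * ‖Q.residual z‖ ^ 2 ≤
      ∑ k, ⟪Q.residual y, Q.A k (y k - z k)⟫_ℝ := by
  rw [← inner_sum, ← residual_sub_residual, inner_sub_right, real_inner_self_eq_norm_sq]
  linarith [norm_sub_sq_real (Q.residual y) (Q.residual z),
    sq_nonneg ‖Q.residual y - Q.residual z‖]

variable [LinearOrder ι]

/-- One cycle of block proximal gradient steps with parameters `P` leads from `x` to `y`. The
partial gradient of the quadratic part enters through `⟪∇ₖ g(w), v⟫ = ⟪residual w, Aₖ v⟫`, which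
needs no adjoint. -/
def IsProxCycle (Q : BlockLeastSquares E F) (P : ι → ℝ) (x y : ∀ k, E k) : Prop :=
  ∀ k, y k ∈ Q.X k ∧ IsMinOn (fun v => ⟪Q.residual (cyclePoint x y k), Q.A k (v - x k)⟫_ℝ +
    P k / 2 * ‖v - x k‖ ^ 2 + Q.h k v) (Q.X k) (y k)

theorem residual_cyclePoint (Q : BlockLeastSquares E F) (x y : ∀ k, E k) (k : ι) :
    Q.residual (cyclePoint x y k) = Q.residual x + ∑ j with j < k, Q.A j (y j - x j) := by
  rw [← sub_eq_iff_eq_add', residual_sub_residual, sum_filter]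
  refine sum_congr rfl fun j _ => ?_
  by_cases hjk : j < k <;> simp [cyclePoint, hjk]

theorem residual_eq_residual_cyclePoint_add (Q : BlockLeastSquares E F) (x y : ∀ k, E k) (k : ι) :
    Q.residual y = Q.residual (cyclePoint x y k) + Q.A k (y k - x k) +
      ∑ j with k < j, Q.A j (y j - x j) := by
  have hk : Q.A k (y k - x k) = ∑ j, if j = k then Q.A j (y j - x j) else 0 := by simp
  rw [add_assoc, ← sub_eq_iff_eq_add', residual_sub_residual, sum_filter, hk, ← sum_add_distrib]
  refine sum_congr rfl fun j _ => ?_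
  rcases lt_trichotomy j k with hjk | rfl | hjk
  · simp [cyclePoint, hjk, hjk.ne, hjk.not_gt]
  · simp [cyclePoint]
  · simp [cyclePoint, hjk, hjk.ne', hjk.not_gt]

variable {Q : BlockLeastSquares E F} {P : ι → ℝ} {x y z : ∀ k, E k}

namespace IsProxCycle

theorem h_sub_le (hcycle : Q.IsProxCycle P x y) (hh : ∀ k, ConvexOn ℝ (Q.X k) (Q.h k))
    (hz : ∀ k, z k ∈ Q.X k) (k : ι) :
    Q.h k (y k) - Q.h k (z k) ≤ ⟪Q.residual (cyclePoint x y k), Q.A k (z k - y k)⟫_ℝ +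
      P k * ⟪y k - x k, z k - y k⟫_ℝ :=
  sub_le_of_isMinOn_prox (ℓ := innerₗ F (Q.residual (cyclePoint x y k)) ∘ₗ Q.A k) (hh k)
    (hcycle k).1 (hz k) (hcycle k).2

theorem sum_mul_norm_sub_sq_le (hcycle : Q.IsProxCycle P x y)
    (hh : ∀ k, ConvexOn ℝ (Q.X k) (Q.h k)) (hA : ∀ k v, ‖Q.A k v‖ ^ 2 ≤ P k * ‖v‖ ^ 2)
    (hx : ∀ k, x k ∈ Q.X k) :
    ∑ k, P k * ‖y k - x k‖ ^ 2 ≤ 2 * (Q.objective x - Q.objective y) := by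
  have hquad : ‖Q.residual y‖ ^ 2 = ‖Q.residual x‖ ^ 2 + ∑ k,
      (2 * ⟪Q.residual (cyclePoint x y k), Q.A k (y k - x k)⟫_ℝ + ‖Q.A k (y k - x k)‖ ^ 2) := by
    rw [sub_eq_iff_eq_add'.mp (Q.residual_sub_residual x y), norm_add_sum_sq]
    simp only [residual_cyclePoint]
  have hblock : ∀ k, P k * ‖y k - x k‖ ^ 2 ≤ 2 * (Q.h k (x k) - Q.h k (y k)) -
      (2 * ⟪Q.residual (cyclePoint x y k), Q.A k (y k - x k)⟫_ℝ + ‖Q.A k (y k - x k)‖ ^ 2) := by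
    intro k
    have hvi := hcycle.h_sub_le hh hx k
    rw [← neg_sub (y k) (x k), map_neg, inner_neg_right, inner_neg_right,
      real_inner_self_eq_norm_sq] at hvi
    linarith [hA k (y k - x k)]
  have hsum := sum_le_sum fun k (_ : k ∈ univ) => hblock k
  rw [sum_sub_distrib, ← mul_sum, sum_sub_distrib] at hsum
  unfold objective
  linarith

theorem objective_le (hcycle : Q.IsProxCycle P x y) (hh : ∀ k, ConvexOn ℝ (Q.X k) (Q.h k))
    (hP : 0 ≤ P) (hA : ∀ k v, ‖Q.A k v‖ ^ 2 ≤ P k * ‖v‖ ^ 2) (hx : ∀ k, x k ∈ Q.X k) :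
    Q.objective y ≤ Q.objective x := by
  have hnonneg : 0 ≤ ∑ k, P k * ‖y k - x k‖ ^ 2 :=
    sum_nonneg fun k _ => mul_nonneg (hP k) (sq_nonneg _)
  linarith [hcycle.sum_mul_norm_sub_sq_le hh hA hx]

-- The residual at `y` differs from the one used in step `k` by the moves of the blocks `j ≥ k`:
-- `j > k` gives the strictly triangular sum and `j = k` completes the diagonal one.
theorem objective_sub_le (hcycle : Q.IsProxCycle P x y) (hh : ∀ k, ConvexOn ℝ (Q.X k) (Q.h k))
    (hz : ∀ k, z k ∈ Q.X k) :
    Q.objective y - Q.objective z ≤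
      ∑ i, ∑ j with i < j, ⟪Q.A i (y i - z i), Q.A j (y j - x j)⟫_ℝ +
      ∑ k, (⟪Q.A k (y k - z k), Q.A k (y k - x k)⟫_ℝ - P k * ⟪y k - z k, y k - x k⟫_ℝ) := by
  have hblock : ∀ k, ⟪Q.residual y, Q.A k (y k - z k)⟫_ℝ + (Q.h k (y k) - Q.h k (z k)) ≤
      ∑ j with k < j, ⟪Q.A k (y k - z k), Q.A j (y j - x j)⟫_ℝ +
      (⟪Q.A k (y k - z k), Q.A k (y k - x k)⟫_ℝ - P k * ⟪y k - z k, y k - x k⟫_ℝ) := by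
    intro k
    have hvi := hcycle.h_sub_le hh hz k
    rw [← neg_sub (y k) (z k), map_neg, inner_neg_right, inner_neg_right,
      real_inner_comm, real_inner_comm (y k - z k)] at hvi
    rw [Q.residual_eq_residual_cyclePoint_add x y k, real_inner_comm, inner_add_right,
      inner_add_right, inner_sum]
    linarith
  have hsum := sum_le_sum fun k (_ : k ∈ univ) => hblock k
  rw [sum_add_distrib, sum_add_distrib, sum_sub_distrib] at hsum
  unfold objective
  linarith [Q.half_norm_residual_sq_sub_le y z]

theorem sq_objective_sub_le (hcycle : Q.IsProxCycle P x y) (hh : ∀ k, ConvexOn ℝ (Q.X k) (Q.h k))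
    (hA : ∀ k v, ‖Q.A k v‖ ^ 2 ≤ P k * ‖v‖ ^ 2) {L m B : ℝ} (hL0 : 0 ≤ L)
    (hL : ∀ v : (∀ k, E k), ‖∑ k, Q.A k (v k)‖ ^ 2 ≤ L * ∑ k, ‖v k‖ ^ 2)
    (hm : 0 < m) (hmP : ∀ k, m ≤ P k) (hB : 0 ≤ B) (hPB : ∀ k, P k ≤ B) {p : ℕ}
    (hp : Fintype.card ι ≤ 2 ^ p) (hx : ∀ k, x k ∈ Q.X k) (hz : ∀ k, z k ∈ Q.X k)
    (hzy : 0 ≤ Q.objective y - Q.objective z) :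
    (Q.objective y - Q.objective z) ^ 2 ≤
      2 * (((3 / 8 + 3 / 4 * (p : ℝ)) ^ 2 + 1) * (B + L ^ 2 / m) * ∑ k, ‖y k - z k‖ ^ 2) *
        (Q.objective x - Q.objective y) := by
  have hP : 0 ≤ P := fun k => hm.le.trans (hmP k)
  set U := ∑ k, ‖y k - z k‖ ^ 2
  set V := ∑ k, P k * ‖y k - x k‖ ^ 2
  have hV0 : 0 ≤ V := sum_nonneg fun k _ => mul_nonneg (hP k) (sq_nonneg _)
  have hmV : ∑ k, ‖y k - x k‖ ^ 2 ≤ V / m := by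
    rw [le_div_iff₀' hm, mul_sum]
    exact sum_le_sum fun k _ => mul_le_mul_of_nonneg_right (hmP k) (sq_nonneg _)
  have htri : ∑ i, ∑ j with i < j, ⟪Q.A i (y i - z i), Q.A j (y j - x j)⟫_ℝ ≤
      (3 / 8 + 3 / 4 * (p : ℝ)) * √(L ^ 2 / m * (U * V)) :=
    calc _ ≤ (3 / 8 + 3 / 4 * (p : ℝ)) * (√(L * U) * √(L * ∑ k, ‖y k - x k‖ ^ 2)) :=
        sum_sum_inner_map_lt_le hL0 hL hp (fun k => y k - z k) fun k => y k - x k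
      _ ≤ (3 / 8 + 3 / 4 * (p : ℝ)) * (√(L * U) * √(L * (V / m))) := by gcongr
      _ = (3 / 8 + 3 / 4 * (p : ℝ)) * √(L ^ 2 / m * (U * V)) := by
        rw [← Real.sqrt_mul (by positivity)]
        ring_nf
  have hdiag := sum_inner_map_sub_mul_inner_le hP hPB hA (fun k => y k - z k) fun k => y k - x k
  calc (Q.objective y - Q.objective z) ^ 2
      ≤ ((3 / 8 + 3 / 4 * (p : ℝ)) ^ 2 + 1) * (L ^ 2 / m * (U * V) + B * (U * V)) :=
        sq_le_of_le_mul_sqrt_add_sqrt hzy (by positivity) (by positivity)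
          ((hcycle.objective_sub_le hh hz).trans (add_le_add htri hdiag))
    _ = ((3 / 8 + 3 / 4 * (p : ℝ)) ^ 2 + 1) * (B + L ^ 2 / m) * U * V := by ring
    _ ≤ ((3 / 8 + 3 / 4 * (p : ℝ)) ^ 2 + 1) * (B + L ^ 2 / m) * U *
        (2 * (Q.objective x - Q.objective y)) := by
        gcongr
        exact hcycle.sum_mul_norm_sub_sq_le hh hA hx
    _ = _ := by ring

end IsProxCycle

theorem objective_sub_le_of_isProxCycle (hh : ∀ k, ConvexOn ℝ (Q.X k) (Q.h k))
    (hA : ∀ k v, ‖Q.A k v‖ ^ 2 ≤ P k * ‖v‖ ^ 2) {L m B : ℝ} (hL0 : 0 ≤ L)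
    (hL : ∀ v : (∀ k, E k), ‖∑ k, Q.A k (v k)‖ ^ 2 ≤ L * ∑ k, ‖v k‖ ^ 2)
    (hm : 0 < m) (hmP : ∀ k, m ≤ P k) (hB : 0 ≤ B) (hPB : ∀ k, P k ≤ B) {p : ℕ}
    (hp : Fintype.card ι ≤ 2 ^ p) {c : ℝ} (hc : (3 / 8 + 3 / 4 * (p : ℝ)) ^ 2 + 1 ≤ c)
    {x : ℕ → ∀ k, E k} (hx0 : ∀ k, x 0 k ∈ Q.X k)
    (hcycle : ∀ r, Q.IsProxCycle P (x r) (x (r + 1))) (hz : ∀ k, z k ∈ Q.X k) {R : ℝ}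
    (hR : ∀ y : (∀ k, E k), (∀ k, y k ∈ Q.X k) → Q.objective y ≤ Q.objective (x 0) →
      ∑ k, ‖y k - z k‖ ^ 2 ≤ R ^ 2) (r : ℕ) :
    Q.objective (x r) - Q.objective z ≤
      3 * max (Q.objective (x 0) - Q.objective z) (c * (B + L ^ 2 / m) * R ^ 2) / (r + 2) := by
  have hc0 : 0 ≤ c := le_trans (by positivity) hc
  have hmem : ∀ r k, x r k ∈ Q.X k := fun r k => by
    cases r with
    | zero => exact hx0 k
    | succ r => exact (hcycle r k).1
  have hmono : Antitone fun r => Q.objective (x r) := antitone_nat_of_succ_le fun r =>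
    (hcycle r).objective_le hh (fun k => hm.le.trans (hmP k)) hA (hmem r)
  refine le_three_mul_div_of_sq_le (D := fun r => Q.objective (x r) - Q.objective z)
    (le_max_of_le_right (by positivity)) (le_max_left _ _) (fun r hzr => ?_) r
  have hdec : 0 ≤ Q.objective (x r) - Q.objective (x (r + 1)) :=
    sub_nonneg.mpr (hmono r.le_succ)
  rw [sub_sub_sub_cancel_right]
  refine ((hcycle r).sq_objective_sub_le hh hA hL0 hL hm hmP hB hPB hp (hmem r) hz hzr).trans ?_
  gcongr
  refine le_max_of_le_right ?_
  gcongr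
  exact hR _ (hmem _) (hmono (Nat.zero_le _))

end BlockLeastSquares

section OperatorNorm

theorem norm_map_sq_le_sSup_mul {V W : Type*} [NormedAddCommGroup V] [NormedSpace ℝ V]
    [FiniteDimensional ℝ V] [NormedAddCommGroup W] [NormedSpace ℝ W] (T : V →ₗ[ℝ] W) (v : V) :
    ‖T v‖ ^ 2 ≤ sSup {r : ℝ | ∃ u : V, ‖u‖ ^ 2 = 1 ∧ r = ‖T u‖ ^ 2} * ‖v‖ ^ 2 := by
  rcases eq_or_ne v 0 with rfl | hv
  · simp
  have hbdd : BddAbove {r : ℝ | ∃ u : V, ‖u‖ ^ 2 = 1 ∧ r = ‖T u‖ ^ 2} := by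
    refine ⟨‖LinearMap.toContinuousLinearMap T‖ ^ 2, ?_⟩
    rintro _ ⟨u, hu, rfl⟩
    calc ‖T u‖ ^ 2 ≤ (‖LinearMap.toContinuousLinearMap T‖ * ‖u‖) ^ 2 := by
          gcongr
          exact (LinearMap.toContinuousLinearMap T).le_opNorm u
      _ = ‖LinearMap.toContinuousLinearMap T‖ ^ 2 := by rw [mul_pow, hu, mul_one]
  have hunit : ‖‖v‖⁻¹ • v‖ ^ 2 = 1 := by
    rw [norm_smul, norm_inv, norm_norm, inv_mul_cancel₀ (norm_ne_zero_iff.mpr hv), one_pow]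
  rw [← div_le_iff₀ (by positivity)]
  refine le_csSup hbdd ⟨‖v‖⁻¹ • v, hunit, ?_⟩
  rw [map_smul, norm_smul, norm_inv, norm_norm, mul_pow, inv_pow, div_eq_inv_mul]

variable {K M N : ℕ}

theorem sqnorm_eq_norm_toLp_sq (v : Fin N → ℝ) : sqnorm v = ‖WithLp.toLp 2 v‖ ^ 2 :=
  (EuclideanSpace.real_norm_sq_eq _).symm

theorem norm_toLpLin_sq_le (A : Matrix (Fin M) (Fin N) ℝ) (v : EuclideanSpace ℝ (Fin N)) :
    ‖Matrix.toLpLin 2 2 A v‖ ^ 2 ≤ lamMaxQ A * ‖v‖ ^ 2 := by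
  have hlam : lamMaxQ A = sSup {r : ℝ | ∃ u : EuclideanSpace ℝ (Fin N), ‖u‖ ^ 2 = 1 ∧
      r = ‖Matrix.toLpLin 2 2 A u‖ ^ 2} := by
    simp only [lamMaxQ, sqnorm_eq_norm_toLp_sq, (WithLp.toLp_surjective 2).exists,
      Matrix.toLpLin_toLp, Matrix.toLin'_apply]
  exact hlam ▸ norm_map_sq_le_sSup_mul _ v

theorem norm_sum_toLpLin_sq_le (A : Fin K → Matrix (Fin M) (Fin N) ℝ)
    (v : Fin K → EuclideanSpace ℝ (Fin N)) :
    ‖∑ k, Matrix.toLpLin 2 2 (A k) (v k)‖ ^ 2 ≤ lamMaxBlock A * ∑ k, ‖v k‖ ^ 2 := by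
  let T : PiLp 2 (fun _ : Fin K => EuclideanSpace ℝ (Fin N)) →ₗ[ℝ] EuclideanSpace ℝ (Fin M) :=
    ∑ k, Matrix.toLpLin 2 2 (A k) ∘ₗ PiLp.projₗ 2 _ k
  have hT : ∀ w, T w = ∑ k, Matrix.toLpLin 2 2 (A k) (w k) := fun w => by simp [T]
  have hlam : lamMaxBlock A = sSup {r : ℝ | ∃ w, ‖w‖ ^ 2 = 1 ∧ r = ‖T w‖ ^ 2} := by
    simp only [lamMaxBlock, sqnorm_eq_norm_toLp_sq, (WithLp.toLp_surjective 2).exists, hT,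
      PiLp.norm_sq_eq_of_L2, ((WithLp.toLp_surjective 2).comp_left).exists, WithLp.toLp_sum,
      Function.comp_apply, Matrix.toLpLin_toLp, Matrix.toLin'_apply]
  simpa only [hlam, hT, PiLp.norm_sq_eq_of_L2] using norm_map_sq_le_sSup_mul T (WithLp.toLp 2 v)

theorem lamMaxBlock_nonneg (A : Fin K → Matrix (Fin M) (Fin N) ℝ) : 0 ≤ lamMaxBlock A := by
  refine Real.sSup_nonneg ?_
  rintro _ ⟨v, -, rfl⟩
  exact sum_nonneg fun i _ => sq_nonneg _

theorem lamMaxQ_pos {A : Matrix (Fin M) (Fin N) ℝ} (hA : A ≠ 0) : 0 < lamMaxQ A := by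
  obtain ⟨v, hv⟩ : ∃ v, Matrix.toLpLin 2 2 A v ≠ 0 := by
    by_contra! hzero
    exact hA ((Matrix.toLpLin 2 2).map_eq_zero_iff.mp (LinearMap.ext hzero))
  exact pos_of_mul_pos_left ((by positivity : 0 < ‖Matrix.toLpLin 2 2 A v‖ ^ 2).trans_le
    (norm_toLpLin_sq_le A v)) (sq_nonneg _)

end OperatorNorm

section MatrixBlocks

open scoped InnerProductSpace

variable {K M N : ℕ} {A : Fin K → Matrix (Fin M) (Fin N) ℝ} {b : Fin M → ℝ}
  {X : Fin K → Set (Fin N → ℝ)} {h : Fin K → (Fin N → ℝ) → ℝ}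

/-- The block least-squares problem given by matrices and coordinate vectors. Vectors are moved to
`EuclideanSpace` because `Fin N → ℝ` carries the sup norm. -/
noncomputable def BlockLeastSquares.ofMatrix (A : Fin K → Matrix (Fin M) (Fin N) ℝ)
    (b : Fin M → ℝ) (X : Fin K → Set (Fin N → ℝ)) (h : Fin K → (Fin N → ℝ) → ℝ) :
    BlockLeastSquares (fun _ : Fin K => EuclideanSpace ℝ (Fin N)) (EuclideanSpace ℝ (Fin M)) where
  A k := Matrix.toLpLin 2 2 (A k)
  b := WithLp.toLp 2 b
  h k v := h k v.ofLp
  X k := WithLp.ofLp ⁻¹' X k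

/-- Block vectors with Euclidean blocks, from their coordinates. -/
def toLpBlocks (x : Fin K → Fin N → ℝ) : Fin K → EuclideanSpace ℝ (Fin N) :=
  fun k => WithLp.toLp 2 (x k)

theorem toLpBlocks_surjective :
    Function.Surjective (toLpBlocks : (Fin K → Fin N → ℝ) → _) :=
  (WithLp.toLp_surjective 2).comp_left

theorem sum_sqnorm_sub_eq (x y : Fin K → Fin N → ℝ) :
    ∑ k, sqnorm (x k - y k) = ∑ k, ‖toLpBlocks x k - toLpBlocks y k‖ ^ 2 := by
  simp only [sqnorm_eq_norm_toLp_sq, WithLp.toLp_sub, toLpBlocks]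

namespace BlockLeastSquares

theorem residual_ofMatrix (x : Fin K → Fin N → ℝ) :
    (ofMatrix A b X h).residual (toLpBlocks x) = WithLp.toLp 2 (resid A b x) := by
  simp only [residual, ofMatrix, toLpBlocks, resid, Matrix.toLpLin_toLp, Matrix.toLin'_apply,
    WithLp.toLp_sub, WithLp.toLp_sum]

theorem objective_ofMatrix (x : Fin K → Fin N → ℝ) :
    (ofMatrix A b X h).objective (toLpBlocks x) = fq A b h x := by
  rw [objective, residual_ofMatrix, ← sqnorm_eq_norm_toLp_sq]
  rfl

end BlockLeastSquares

theorem dotp_gradk (x : Fin K → Fin N → ℝ) (k : Fin K) (v : Fin N → ℝ) :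
    dotp (gradk A b x k) v =
      ⟪WithLp.toLp 2 (resid A b x), Matrix.toLpLin 2 2 (A k) (WithLp.toLp 2 v)⟫_ℝ := by
  rw [Matrix.toLpLin_toLp, Matrix.toLin'_apply, EuclideanSpace.inner_toLp_toLp, star_trivial,
    dotProduct_comm, Matrix.dotProduct_mulVec, ← Matrix.mulVec_transpose]
  rfl

theorem BCPGStep.isProxCycle {P : Fin K → ℝ} {x y : Fin K → Fin N → ℝ}
    (hstep : BCPGStep A b h X P x y) :
    (BlockLeastSquares.ofMatrix A b X h).IsProxCycle P (toLpBlocks x) (toLpBlocks y) := by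
  intro k
  have hpoint : cyclePoint (toLpBlocks x) (toLpBlocks y) k = toLpBlocks (wpt x y k) :=
    funext fun j => (apply_ite (WithLp.toLp 2) _ _ _).symm
  have hobj : ∀ v, bcpgObj A b h P x y k v =
      ⟪(BlockLeastSquares.ofMatrix A b X h).residual (cyclePoint (toLpBlocks x) (toLpBlocks y) k),
        Matrix.toLpLin 2 2 (A k) (WithLp.toLp 2 v - toLpBlocks x k)⟫_ℝ +
      P k / 2 * ‖WithLp.toLp 2 v - toLpBlocks x k‖ ^ 2 + h k v := fun v => by
    rw [hpoint, BlockLeastSquares.residual_ofMatrix, bcpgObj, dotp_gradk, sqnorm_eq_norm_toLp_sq]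
    rfl
  refine ⟨(hstep k).1, isMinOn_iff.mpr fun v hv => ?_⟩
  have hle := (hstep k).2 v.ofLp hv
  rwa [hobj, hobj] at hle

theorem bcpg_rate_aggressive_general (hK : 1 ≤ K) (hNK : 3 ≤ N * K)
    (hh : ∀ k, ConvexOn ℝ (X k) (h k)) {P : Fin K → ℝ} (hP0 : ∀ k, 0 < P k)
    (hP : ∀ k, lamMaxQ (A k) ≤ P k) {x : ℕ → Fin K → Fin N → ℝ} (hx0 : ∀ k, x 0 k ∈ X k)
    (hstep : ∀ r, BCPGStep A b h X P (x r) (x (r + 1)))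
    {z : Fin K → Fin N → ℝ} (hz : ∀ k, z k ∈ X k) {R : ℝ}
    (hR : ∀ y : Fin K → Fin N → ℝ, (∀ k, y k ∈ X k) → fq A b h y ≤ fq A b h (x 0) →
      √(∑ k, sqnorm (y k - z k)) ≤ R) (r : ℕ) :
    fq A b h (x (r + 1)) - fq A b h z ≤
      3 * max (fq A b h (x 0) - fq A b h z)
        (2 * Real.log (2 * (N : ℝ) * (K : ℝ)) ^ 2 *
          (maxOf hK P + lamMaxBlock A ^ 2 / minOf hK P) * R ^ 2) / (r + 1) := by
  have hmin : 0 < minOf hK P := (lt_inf'_iff _).mpr fun k _ => hP0 k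
  have hminP : ∀ k, minOf hK P ≤ P k := fun k => inf'_le P (mem_univ k)
  have hPmax : ∀ k, P k ≤ maxOf hK P := fun k => le_sup' P (mem_univ k)
  have hmax : 0 ≤ maxOf hK P := (hP0 ⟨0, hK⟩).le.trans (hPmax _)
  have hcard : Fintype.card (Fin K) ≤ 2 ^ Nat.clog 2 (N * K) := by
    rw [Fintype.card_fin]
    exact (Nat.le_mul_of_pos_left K (Nat.pos_of_mul_pos_right (by lia : 0 < N * K))).trans
      (Nat.le_pow_clog one_lt_two _)
  have hlog := clog_two_sq_add_one_le hNK
  push_cast [← mul_assoc] at hlog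
  have hconv : ∀ k, ConvexOn ℝ (WithLp.ofLp ⁻¹' X k) fun v : EuclideanSpace ℝ (Fin N) =>
      h k v.ofLp := fun k => (hh k).comp_linearMap (WithLp.linearEquiv 2 ℝ _).toLinearMap
  have hrate := BlockLeastSquares.objective_sub_le_of_isProxCycle
    (Q := BlockLeastSquares.ofMatrix A b X h) (x := fun r => toLpBlocks (x r))
    (z := toLpBlocks z) (R := R) hconv
    (fun k v => (norm_toLpLin_sq_le (A k) v).trans (by gcongr; exact hP k))
    (lamMaxBlock_nonneg A) (norm_sum_toLpLin_sq_le A) hmin hminP hmax hPmax hcard hlog hx0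
    (fun r => (hstep r).isProxCycle) hz ?_ (r + 1)
  · simp only [BlockLeastSquares.objective_ofMatrix] at hrate
    refine hrate.trans (div_le_div_of_nonneg_left (by positivity) (by positivity) ?_)
    push_cast
    linarith
  · refine toLpBlocks_surjective.forall.mpr fun y hy hle => ?_
    simp only [BlockLeastSquares.objective_ofMatrix] at hle
    rw [← sum_sqnorm_sub_eq]
    exact (Real.sqrt_le_iff.mp (hR y hy hle)).2

end MatrixBlocks

/-- Theorem 1, part 2: cyclic BCPG with stepsizes `P_k = L_k`
satisfies `Δ^{(r+1)} ≤ 3 max{Δ^{(0)}, 2 log²(2NK)(L_max + L²/L_min) R_0²}/(r+1)`. -/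
theorem bcpg_rate_aggressive {K M N : ℕ} (hK : 1 ≤ K) (hM : 1 ≤ M) (hN : 1 ≤ N)
    (hNK : 3 ≤ N * K)
    (A : Fin K → Matrix (Fin M) (Fin N) ℝ) (hA : ∀ k, A k ≠ 0) (b : Fin M → ℝ)
    (X : Fin K → Set (Fin N → ℝ)) (h : Fin K → (Fin N → ℝ) → ℝ)
    (hXne : ∀ k, (X k).Nonempty) (hXcl : ∀ k, IsClosed (X k))
    (hXcv : ∀ k, Convex ℝ (X k))
    (hhcv : ∀ k, ConvexOn ℝ Set.univ (h k))
    (hhlsc : ∀ k, LowerSemicontinuous (h k))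
    (P : Fin K → ℝ) (hP : ∀ k, P k = lamMaxQ (A k))
    (x : ℕ → Fin K → Fin N → ℝ) (hx0 : ∀ k, x 0 k ∈ X k)
    (hstep : ∀ r : ℕ, BCPGStep A b h X P (x r) (x (r + 1)))
    (xstar : Fin K → Fin N → ℝ) (hxstarX : ∀ k, xstar k ∈ X k)
    (hxstar : ∀ y : Fin K → Fin N → ℝ, (∀ k, y k ∈ X k) → fq A b h xstar ≤ fq A b h y)
    (R0 : ℝ)
    (hR0 : ∀ z : Fin K → Fin N → ℝ, (∀ k, z k ∈ X k) → fq A b h z ≤ fq A b h (x 0) →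
      ∀ y : Fin K → Fin N → ℝ, (∀ k, y k ∈ X k) →
        (∀ z' : Fin K → Fin N → ℝ, (∀ k, z' k ∈ X k) → fq A b h y ≤ fq A b h z') →
        Real.sqrt (∑ k, sqnorm (z k - y k)) ≤ R0)
    (r : ℕ) :
    fq A b h (x (r + 1)) - fq A b h xstar ≤
      3 * max (fq A b h (x 0) - fq A b h xstar)
          (2 * Real.log (2 * (N : ℝ) * (K : ℝ)) ^ 2 *
            (maxOf hK (fun k => lamMaxQ (A k)) +
              lamMaxBlock A ^ 2 / minOf hK (fun k => lamMaxQ (A k))) * R0 ^ 2) /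
        (r + 1) := by
  obtain rfl : P = fun k => lamMaxQ (A k) := funext hP
  exact bcpg_rate_aggressive_general hK hNK
    (fun k => (hhcv k).subset (Set.subset_univ _) (hXcv k)) (fun k => lamMaxQ_pos (hA k))
    (fun _ => le_rfl) hx0 hstep hxstarX
    (fun y hy hle => hR0 y hy hle xstar hxstarX hxstar) r
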